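/- Let K be a field of characteristic 0 and let M be a Malcev dialgebra over K. Define the trilinear operation ⟨a,b,c⟩ = 2(ab)c + a(bc) + (ac)b on M. Then for all a,b,c,d,e ∈ M: ⟨a,⟨b,c,d⟩,e⟩ = ⟨⟨a,b,c⟩,d,e⟩ − ⟨⟨a,c,b⟩,d,e⟩ − ⟨⟨a,d,b⟩,c,e⟩ + ⟨⟨a,d,c⟩,b,e⟩. -/

import Mathlib

/-- The trilinear operation `⟨a,b,c⟩ = 2(ab)c + a(bc) + (ac)b` associated to a
bilinear product `f`. -/
def trip {K M : Type} [Field K] [AddCommGroup M] [Module K M]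
    (f : M →ₗ[K] M →ₗ[K] M) (a b c : M) : M :=
  (2 : K) • f (f a b) c + f a (f b c) + f (f a c) b

/-!
Every right multiplication of a Malcev dialgebra is a derivation of the triple product `⟪a, b, c⟫`.
Moreover `⟪a, b, c⟫` satisfies the Leibniz triple system identity with the outer operation
`⟨·, ·, e⟩` replaced by the product of the dialgebra:
`a⟪b, c, d⟫ = ⟪a, b, c⟫d - ⟪a, c, b⟫d - ⟪a, d, b⟫c + ⟪a, d, c⟫b`.
Multiplying this on the right by `e` gives the identity for the operation `(x, y) ↦ (xy)e`, and
differentiating it along right multiplication by `e` gives the identity for the operation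
`(x, y) ↦ x(ye) + (xe)y`. Since `⟪x, y, e⟫ = 2(xy)e + x(ye) + (xe)y`, adding twice the former to the
latter finishes the proof.
-/

/-- A right Malcev dialgebra, as a condition on a nonassociative ring: the identities do not involve
the scalars, so no base ring is fixed. -/
class IsMalcevDialgebra (M : Type*) [NonUnitalNonAssocRing M] : Prop where
  mul_mul_add_mul_mul_swap (a b c : M) : a * (b * c) + a * (c * b) = 0
  diMalcev (a b c d : M) :
    a * b * c * d - a * d * b * c - a * (c * d) * b - a * c * (b * d) - a * (b * c * d) = 0

/-- The triple product `2(ab)c + a(bc) + (ac)b`, written `⟪a, b, c⟫`. On a Malcev algebra it is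
Loos's operation `2(ab)c - (bc)a - (ca)b`, which makes the algebra a Lie triple system. -/
def loosTriple {M : Type*} [NonUnitalNonAssocRing M] (a b c : M) : M :=
  2 • (a * b * c) + a * (b * c) + a * c * b

local notation "⟪" a ", " b ", " c "⟫" => loosTriple a b c

namespace IsMalcevDialgebra

variable {M : Type*} [NonUnitalNonAssocRing M] [IsMalcevDialgebra M]

theorem mul_mul_swap (a b c : M) : a * (b * c) = -(a * (c * b)) :=
  eq_neg_of_add_eq_zero_left (mul_mul_add_mul_mul_swap a b c)

theorem mul_mul_mul_swap (a b c d : M) : a * (b * c * d) = -(a * (c * b * d)) := by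
  rw [mul_mul_swap a (b * c) d, mul_mul_swap d b c, mul_neg, mul_mul_swap a d (c * b), neg_neg]

theorem symmetrized_mul_mul_leibniz (a b c d : M) :
    (a * b * c + a * c * b) * d =
      (a * d * b * c + a * d * c * b) + (a * (b * d) * c + a * c * (b * d))
        + (a * b * (c * d) + a * (c * d) * b) := by
  have hbc := diMalcev a b c d
  have hcb := diMalcev a c b d
  rw [mul_mul_mul_swap a c b d] at hcb
  rw [add_mul]
  linear_combination (norm := abel) hbc + hcb

theorem mul_jacobian (a b c d : M) :
    a * (b * c * d + c * d * b + d * b * c) =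
      (a * b * (c * d) - a * (c * d) * b) + (a * c * (d * b) - a * (d * b) * c)
        + (a * d * (b * c) - a * (b * c) * d) := by
  have hbcd := diMalcev a b c d
  have hcdb := diMalcev a c d b
  have hdbc := diMalcev a d b c
  rw [mul_mul_swap (a * c) b d] at hbcd
  rw [mul_mul_swap (a * d) c b] at hcdb
  rw [mul_mul_swap (a * b) d c] at hdbc
  simp only [mul_add]
  linear_combination (norm := abel) -hbcd - hcdb - hdbc

theorem mul_mul_add_mul_mul_leibniz (a b c d : M) :
    (a * b * c + a * (b * c)) * d =
      (a * d * b * c + a * d * (b * c)) + (a * (b * d) * c + a * (b * d * c))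
        + (a * b * (c * d) + a * (b * (c * d))) := by
  have hdi := diMalcev a b c d
  have hjac := mul_jacobian a b c d
  rw [mul_mul_swap (a * c) d b, mul_mul_swap a d b, mul_add, mul_add,
    mul_mul_mul_swap a d b c, neg_mul] at hjac
  rw [add_mul, mul_mul_swap a b (c * d)]
  linear_combination (norm := abel) hdi + hjac

theorem loosTriple_leibniz (a b c d : M) :
    ⟪a, b, c⟫ * d = ⟪a * d, b, c⟫ + ⟪a, b * d, c⟫ + ⟪a, b, c * d⟫ := by
  have loosTriple_eq (x y z : M) :
      ⟪x, y, z⟫ = (x * y * z + x * z * y) + (x * y * z + x * (y * z)) := by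
    rw [loosTriple]
    abel
  rw [loosTriple_eq, add_mul, symmetrized_mul_mul_leibniz, mul_mul_add_mul_mul_leibniz]
  simp only [loosTriple_eq]
  abel

theorem mul_loosTriple_eq_sub_mul_jacobian (a b c d : M) :
    a * ⟪b, c, d⟫ = 3 • (a * (b * c * d)) - a * (b * c * d + c * d * b + d * b * c) := by
  simp only [loosTriple, mul_add, mul_smul_comm, mul_mul_swap a b (c * d), mul_mul_mul_swap a b d c]
  abel

theorem mul_loosTriple (a b c d : M) :
    a * ⟪b, c, d⟫ = ⟪a, b, c⟫ * d - ⟪a, c, b⟫ * d - ⟪a, d, b⟫ * c + ⟪a, d, c⟫ * b := by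
  have hbc := symmetrized_mul_mul_leibniz a b c d
  have hcd := symmetrized_mul_mul_leibniz a c d b
  have hdi := diMalcev a b c d
  rw [mul_loosTriple_eq_sub_mul_jacobian, mul_jacobian]
  simp only [loosTriple, add_mul, two_nsmul, neg_mul, mul_mul_swap _ b d, mul_mul_swap _ c b,
    mul_mul_swap _ d c] at hbc hcd hdi ⊢
  linear_combination (norm := abel) hbc - hcd - 3 • hdi

theorem differentiated_mul_loosTriple (a b c d e : M) :
    a * (⟪b, c, d⟫ * e) + a * e * ⟪b, c, d⟫ =
      (⟪a, b, c⟫ * (d * e) + ⟪a, b, c⟫ * e * d) - (⟪a, c, b⟫ * (d * e) + ⟪a, c, b⟫ * e * d)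
        - (⟪a, d, b⟫ * (c * e) + ⟪a, d, b⟫ * e * c)
        + (⟪a, d, c⟫ * (b * e) + ⟪a, d, c⟫ * e * b) := by
  have ha := mul_loosTriple (a * e) b c d
  have hb := mul_loosTriple a (b * e) c d
  have hc := mul_loosTriple a b (c * e) d
  have hd := mul_loosTriple a b c (d * e)
  simp only [loosTriple_leibniz _ _ _ e, mul_add, add_mul]
  linear_combination (norm := abel) ha + hb + hc + hd

end IsMalcevDialgebra

open IsMalcevDialgebra in
theorem trilinear_first_LTS_identity_general {M : Type*} [NonUnitalNonAssocRing M]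
    [IsMalcevDialgebra M] (a b c d e : M) :
    ⟪a, ⟪b, c, d⟫, e⟫ =
      ⟪⟪a, b, c⟫, d, e⟫ - ⟪⟪a, c, b⟫, d, e⟫ - ⟪⟪a, d, b⟫, c, e⟫ + ⟪⟪a, d, c⟫, b, e⟫ := by
  have loosTriple_eq (x y : M) : ⟪x, y, e⟫ = 2 • (x * y * e) + (x * (y * e) + x * e * y) :=
    add_assoc _ _ _
  have hmul : a * ⟪b, c, d⟫ * e =
      ⟪a, b, c⟫ * d * e - ⟪a, c, b⟫ * d * e - ⟪a, d, b⟫ * c * e + ⟪a, d, c⟫ * b * e := by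
    rw [mul_loosTriple]
    simp only [add_mul, sub_mul]
  have hdiff := differentiated_mul_loosTriple a b c d e
  simp only [loosTriple_eq]
  linear_combination (norm := abel) 2 • hmul + hdiff

/-- The nonassociative ring whose product is a given bilinear map; it carries the identities of
`loosTriple` over to `trip`. -/
abbrev nonUnitalNonAssocRingOfBilin {K M : Type*} [CommSemiring K] [AddCommGroup M] [Module K M]
    (f : M →ₗ[K] M →ₗ[K] M) : NonUnitalNonAssocRing M where
  mul a b := f a b
  left_distrib a := map_add (f a)
  right_distrib := LinearMap.map_add₂ f
  zero_mul := LinearMap.map_zero₂ f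
  mul_zero a := map_zero (f a)

theorem trip_eq_loosTriple {K M : Type} [Field K] [AddCommGroup M] [Module K M]
    (f : M →ₗ[K] M →ₗ[K] M) :
    trip f = letI := nonUnitalNonAssocRingOfBilin f; loosTriple := by
  funext a b c
  exact congrArg (· + f a (f b c) + f (f a c) b) (ofNat_smul_eq_nsmul K 2 (f (f a b) c))

/-- In any Malcev dialgebra `M` over a field `K` of
characteristic 0, the trilinear operation `⟨a,b,c⟩ = 2(ab)c + a(bc) + (ac)b`
satisfies the first Leibniz triple system identity:
`⟨a,⟨b,c,d⟩,e⟩ = ⟨⟨a,b,c⟩,d,e⟩ − ⟨⟨a,c,b⟩,d,e⟩ − ⟨⟨a,d,b⟩,c,e⟩ + ⟨⟨a,d,c⟩,b,e⟩`. -/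
theorem trilinear_first_LTS_identity (K : Type) [Field K] [CharZero K]
    (M : Type) [AddCommGroup M] [Module K M]
    (f : M →ₗ[K] M →ₗ[K] M)
    (hra : ∀ a b c : M, f a (f b c) + f a (f c b) = 0)
    (hdm : ∀ a b c d : M,
      f (f (f a b) c) d - f (f (f a d) b) c - f (f a (f c d)) b
        - f (f a c) (f b d) - f a (f (f b c) d) = 0) :
    ∀ a b c d e : M,
      trip f a (trip f b c d) e
        = trip f (trip f a b c) d e - trip f (trip f a c b) d e
          - trip f (trip f a d b) c e + trip f (trip f a d c) b e := by
  let _ := nonUnitalNonAssocRingOfBilin f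
  have : IsMalcevDialgebra M := ⟨hra, hdm⟩
  simpa only [trip_eq_loosTriple] using trilinear_first_LTS_identity_general (M := M)
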